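/- arXiv:1610.03897 — 2 statements merged into one kernel-verified Lean document; each statement's English description precedes it below -/
import Mathlib

section
/- Let G = (V, E) be a finite simple graph with injective edge-weight function w, let F be a forest in G, and let C ⊆ V. Let e = {u, v} be an edge of G with exactly one endpoint in C, and suppose that either no edge of F has exactly one endpoint in C, or w(e) ≤ w(e*) where e* is the minimum-weight edge of F having exactly one endpoint in C. Then e is F-light. -/
/-- An edge `e` (as an element of `Sym2 V`) has exactly one endpoint in `C`. -/
def CrossesCut {V : Type} (C : Set V) (e : Sym2 V) : Prop :=
  ∃ a b : V, e = s(a, b) ∧ a ∈ C ∧ b ∉ C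

/-- `u` and `v` are `F`-light with respect to the weight function `w`:
either `u` and `v` lie in different components of the forest `F` (no path, so
`w_F(u,v) = ∞`), or the (unique) path between them in `F` contains an edge of
weight at least `w s(u,v)`. -/
def FLightPair {V : Type} (F : SimpleGraph V) (w : Sym2 V → ℝ) (u v : V) : Prop :=
  ∀ p : F.Path u v, ∃ e ∈ (p : F.Walk u v).edges, w s(u, v) ≤ w e

/-- An edge of `G` is `F`-light. -/
def FLight {V : Type} (F : SimpleGraph V) (w : Sym2 V → ℝ) (e : Sym2 V) : Prop :=
  ∀ u v : V, e = s(u, v) → FLightPair F w u v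

/-- A walk from a vertex in `C` to a vertex outside `C` uses an edge crossing the cut. -/
theorem exists_mem_edges_crossesCut {V : Type} {F : SimpleGraph V} {C : Set V} {u v : V}
    (p : F.Walk u v) (hu : u ∈ C) (hv : v ∉ C) : ∃ e ∈ p.edges, CrossesCut C e := by
  obtain ⟨d, hd, hfst, hsnd⟩ := p.exists_boundary_dart C hu hv
  exact ⟨d.edge, List.mem_map_of_mem hd, d.fst, d.snd, rfl, hfst, hsnd⟩

/-- If `e = {u,v}` is an edge of `G` with exactly one endpoint in `C`, and either no edge
of the forest `F` has exactly one endpoint in `C`, or `w e ≤ w e*` where `e*` is the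
minimum-weight edge of `F` having exactly one endpoint in `C`, then `e` is `F`-light. -/
theorem stmt_0 {V : Type} [Fintype V] [DecidableEq V]
    (G F : SimpleGraph V) (w : Sym2 V → ℝ)
    (hw : Set.InjOn w G.edgeSet)
    (hFG : F ≤ G) (hFacyclic : F.IsAcyclic)
    (C : Set V) (u v : V)
    (he : s(u, v) ∈ G.edgeSet) (huC : u ∈ C) (hvC : v ∉ C)
    (hmin :
      (¬ ∃ f ∈ F.edgeSet, CrossesCut C f) ∨
      (∃ estar, estar ∈ F.edgeSet ∧ CrossesCut C estar ∧
        (∀ f ∈ F.edgeSet, CrossesCut C f → w estar ≤ w f) ∧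
        w s(u, v) ≤ w estar)) :
    FLight F w s(u, v) := by
  have hcut : ∀ f ∈ F.edgeSet, CrossesCut C f → w s(u, v) ≤ w f := by
    intro f hf hfC
    rcases hmin with hnone | ⟨estar, -, -, hstar, hle⟩
    · exact absurd ⟨f, hf, hfC⟩ hnone
    · exact hle.trans (hstar f hf hfC)
  intro a b hab p
  rw [← hab]
  rcases Sym2.eq_iff.mp hab with ⟨rfl, rfl⟩ | ⟨rfl, rfl⟩
  · obtain ⟨f, hf, hfC⟩ := exists_mem_edges_crossesCut (p : F.Walk u v) huC hvC
    exact ⟨f, hf, hcut f (p.1.edges_subset_edgeSet hf) hfC⟩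
  · obtain ⟨f, hf, hfC⟩ := exists_mem_edges_crossesCut (p : F.Walk v u).reverse huC hvC
    rw [SimpleGraph.Walk.edges_reverse, List.mem_reverse] at hf
    exact ⟨f, hf, hcut f (p.1.edges_subset_edgeSet hf) hfC⟩
end

section
/- Let n ≥ 2 be an integer and let ε be a real number with 0 < ε ≤ 1 and n^{ε} ≥ 2. Let a, b ≥ 0 and c ≥ 1 be real numbers, and let f : ℕ → ℝ satisfy: f(m) ≤ b for every m ≤ c·n^{1+ε}, and f(m) ≤ f(⌈m/n^{ε}⌉) + a for every m > c·n^{1+ε}. Then for every m ≤ n², f(m) ≤ b + a·⌈1/ε⌉. -/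
/-- If `f` is at most `b` up to a threshold `T ≥ x + 2`, and above `T` dividing the argument by
`q ≥ 2` (rounding up) costs at most `a`, then `f m ≤ b + a * k` whenever `m ≤ x * q ^ k + 2`. -/
theorem le_add_mul_of_ceil_div_recurrence {q x T a b : ℝ} (hq : 2 ≤ q) (hT : x + 2 ≤ T)
    (ha : 0 ≤ a) {f : ℕ → ℝ} (hbase : ∀ m : ℕ, (m : ℝ) ≤ T → f m ≤ b)
    (hrec : ∀ m : ℕ, T < (m : ℝ) → f m ≤ f ⌈(m : ℝ) / q⌉₊ + a) (k : ℕ) :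
    ∀ m : ℕ, (m : ℝ) ≤ x * q ^ k + 2 → f m ≤ b + a * k := by
  induction k with
  | zero =>
    intro m hm
    simpa using hbase m (by linarith [pow_zero q])
  | succ k ih =>
    intro m hm
    rcases le_or_gt (m : ℝ) T with h | h
    · have : 0 ≤ a * ((k + 1 : ℕ) : ℝ) := by positivity
      linarith [hbase m h]
    · have hq0 : 0 < q := by linarith
      have hdiv : (m : ℝ) / q ≤ x * q ^ k + 1 := by
        rw [div_le_iff₀ hq0]
        rw [pow_succ] at hm
        linarith
      have hceil := Nat.ceil_lt_add_one (show 0 ≤ (m : ℝ) / q by positivity)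
      have := ih ⌈(m : ℝ) / q⌉₊ (by linarith)
      push_cast
      linarith [hrec m h]

/-- Recurrence for the round complexity of the recursive algorithm MST-v2: if
`n ≥ 2`, `0 < ε ≤ 1` with `n^ε ≥ 2`, `a, b ≥ 0`, `c ≥ 1`, and `f : ℕ → ℝ` satisfies
`f(m) ≤ b` for every `m ≤ c·n^(1+ε)` and `f(m) ≤ f(⌈m/n^ε⌉) + a` for every
`m > c·n^(1+ε)`, then `f(m) ≤ b + a·⌈1/ε⌉` for every `m ≤ n²`. -/
theorem stmt_16 (n : ℕ) (hn : 2 ≤ n) (ε : ℝ) (hε0 : 0 < ε) (hε1 : ε ≤ 1)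
    (hnε : 2 ≤ (n : ℝ) ^ ε)
    (a b c : ℝ) (ha : 0 ≤ a) (hb : 0 ≤ b) (hc : 1 ≤ c)
    (f : ℕ → ℝ)
    (hbase : ∀ m : ℕ, (m : ℝ) ≤ c * (n : ℝ) ^ ((1 : ℝ) + ε) → f m ≤ b)
    (hrec : ∀ m : ℕ, c * (n : ℝ) ^ ((1 : ℝ) + ε) < (m : ℝ) →
      f m ≤ f ⌈(m : ℝ) / (n : ℝ) ^ ε⌉₊ + a) :
    ∀ m : ℕ, m ≤ n ^ 2 → f m ≤ b + a * (⌈1 / ε⌉₊ : ℝ) := by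
  intro m hm
  have hn2 : (2 : ℝ) ≤ n := by exact_mod_cast hn
  have hT : (n : ℝ) + 2 ≤ c * (n : ℝ) ^ ((1 : ℝ) + ε) := by
    rw [Real.rpow_add (by linarith), Real.rpow_one]
    nlinarith [mul_le_mul_of_nonneg_left hnε (by linarith : (0 : ℝ) ≤ n)]
  have hpow : (n : ℝ) ≤ ((n : ℝ) ^ ε) ^ ⌈1 / ε⌉₊ := by
    rw [← Real.rpow_mul_natCast (by linarith)]
    refine Real.self_le_rpow_of_one_le (by linarith) ?_
    have := (div_le_iff₀ hε0).1 (Nat.le_ceil (1 / ε))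
    linarith
  have hm' : (m : ℝ) ≤ (n : ℝ) ^ 2 := by exact_mod_cast hm
  exact le_add_mul_of_ceil_div_recurrence hnε hT ha hbase hrec _ m (by nlinarith)
end
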